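/- arXiv:2507.02015 — 3 statements merged into one kernel-verified Lean document; each statement's English description precedes it below -/
import Mathlib

section
/- Let G be a simple graph on n ≥ 3 vertices. If (∑_{v : 0 < deg_G(v) < n−1} deg_G(v)) + |E(G)| < n(n−1)/2, then there is no Marcello step from G to the complete graph on its vertex set; consequently every Marcello chain from G to the complete graph has length at least 2, i.e., ϖ(G) ≥ 2. -/
open SimpleGraph

attribute [local instance] Classical.propDecidable

/-- The degree of a vertex. -/
noncomputable def mdeg {V : Type*} (G : SimpleGraph V) (v : V) : ℕ :=
  (G.neighborSet v).ncard

/-- `G'` is obtained from `G` by a Marcello step. -/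
def MarcelloStep {V : Type*} [Fintype V] (G G' : SimpleGraph V) : Prop :=
  G ≤ G' ∧ ∃ f : Sym2 V → V,
    (∀ e ∈ G'.edgeSet \ G.edgeSet, f e ∈ e) ∧
    (∀ v : V, (∃ e ∈ G'.edgeSet \ G.edgeSet, f e = v) →
        0 < mdeg G v ∧ mdeg G v < Fintype.card V - 1) ∧
    (∀ v : V, ((G'.edgeSet \ G.edgeSet) ∩ {e | f e = v}).ncard ≤ mdeg G v)

/-- There is a Marcello chain of length `k` from `G` to `H`. -/
def MarcelloChain {V : Type*} [Fintype V] (G H : SimpleGraph V) (k : ℕ) : Prop :=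
  ∃ c : ℕ → SimpleGraph V, c 0 = G ∧ c k = H ∧ ∀ i < k, MarcelloStep (c i) (c (i + 1))

/-- The Marcello number `ϖ(G)`. -/
noncomputable def marcelloNumber {V : Type*} [Fintype V] (G : SimpleGraph V) : ℕ :=
  sInf {k | MarcelloChain G (⊤ : SimpleGraph V) k}

/-- The sum of degrees over vertices `v` with `0 < deg v < n - 1`. -/
noncomputable def marcelloSum {V : Type*} [Fintype V] (G : SimpleGraph V) : ℕ :=
  ∑ v ∈ Finset.univ.filter
      (fun v => 0 < mdeg G v ∧ mdeg G v < Fintype.card V - 1), mdeg G v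

/-!
In a step from `G` to `H`, charge every new edge to its initiator. Only vertices `v` with
`0 < deg v < n - 1` are charged, and each of them at most `deg v` times, so a single step adds at
most `marcelloSum G` edges.
-/

theorem ncard_le_sum_of_ncard_fiber_le {α β : Type*} {s : Set α} (hs : s.Finite) {f : α → β}
    {t : Finset β} {d : β → ℕ} (hf : Set.MapsTo f s t)
    (hd : ∀ b ∈ t, (s ∩ {a | f a = b}).ncard ≤ d b) : s.ncard ≤ ∑ b ∈ t, d b := by
  have hcover : s ⊆ ⋃ b ∈ t, s ∩ {a | f a = b} := fun a ha ↦
    Set.mem_biUnion (hf ha) ⟨ha, rfl⟩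
  have hfinite : (⋃ b ∈ t, s ∩ {a | f a = b}).Finite :=
    hs.subset (Set.iUnion₂_subset fun _ _ ↦ Set.inter_subset_left)
  calc s.ncard ≤ (⋃ b ∈ t, s ∩ {a | f a = b}).ncard := Set.ncard_le_ncard hcover hfinite
    _ ≤ ∑ b ∈ t, (s ∩ {a | f a = b}).ncard := t.set_ncard_biUnion_le _
    _ ≤ ∑ b ∈ t, d b := Finset.sum_le_sum hd

section Marcello

variable {V : Type*} [Fintype V] {G H : SimpleGraph V}

theorem ncard_edgeSet_top :
    (⊤ : SimpleGraph V).edgeSet.ncard = Fintype.card V * (Fintype.card V - 1) / 2 := by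
  rw [← Nat.choose_two_right, ← card_edgeFinset_top_eq_card_choose_two,
    ← coe_edgeFinset, Set.ncard_coe_finset]

theorem MarcelloStep.ncard_edgeSet_sdiff_le (hstep : MarcelloStep G H) :
    (H.edgeSet \ G.edgeSet).ncard ≤ marcelloSum G := by
  obtain ⟨-, f, -, hactive, hbound⟩ := hstep
  refine ncard_le_sum_of_ncard_fiber_le (Set.toFinite _) (f := f) (fun e he ↦ ?_)
    fun v _ ↦ hbound v
  simpa using hactive (f e) ⟨e, he, rfl⟩

theorem MarcelloStep.ncard_edgeSet_le (hstep : MarcelloStep G H) :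
    H.edgeSet.ncard ≤ marcelloSum G + G.edgeSet.ncard :=
  calc H.edgeSet.ncard = (H.edgeSet \ G.edgeSet).ncard + G.edgeSet.ncard :=
        (Set.ncard_sdiff_add_ncard_of_subset (edgeSet_mono hstep.1)).symm
    _ ≤ marcelloSum G + G.edgeSet.ncard := by grw [hstep.ncard_edgeSet_sdiff_le]

theorem MarcelloChain.eq_of_zero (hchain : MarcelloChain G H 0) : G = H := by
  obtain ⟨c, rfl, rfl, -⟩ := hchain
  rfl

theorem MarcelloChain.marcelloStep_of_one (hchain : MarcelloChain G H 1) : MarcelloStep G H := by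
  obtain ⟨c, rfl, rfl, hstep⟩ := hchain
  exact hstep 0 one_pos

theorem MarcelloChain.two_le_of_ne_of_not_marcelloStep {k : ℕ} (hchain : MarcelloChain G H k)
    (hne : G ≠ H) (hstep : ¬ MarcelloStep G H) : 2 ≤ k := by
  match k, hchain with
  | 0, hchain => exact absurd hchain.eq_of_zero hne
  | 1, hchain => exact absurd hchain.marcelloStep_of_one hstep
  | k + 2, _ => exact Nat.le_add_left 2 k

theorem no_marcello_step_of_degree_sum_lt_general
    (h : marcelloSum G + G.edgeSet.ncard < H.edgeSet.ncard) :
    ¬ MarcelloStep G H ∧ ∀ k : ℕ, MarcelloChain G H k → 2 ≤ k := by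
  have hne : G ≠ H := by
    rintro rfl
    exact (Nat.le_add_left _ _).not_gt h
  have hstep : ¬ MarcelloStep G H := fun hstep ↦ hstep.ncard_edgeSet_le.not_gt h
  exact ⟨hstep, fun _ hchain ↦ hchain.two_le_of_ne_of_not_marcelloStep hne hstep⟩

end Marcello

/-- If `∑_{0 < deg v < n-1} deg v + |E(G)| < n(n-1)/2` then no Marcello step completes `G`,
and every Marcello chain from `G` to the complete graph has length at least `2`. -/
theorem no_marcello_step_of_degree_sum_lt {V : Type*} [Fintype V] (G : SimpleGraph V)
    (hn : 3 ≤ Fintype.card V)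
    (h : marcelloSum G + G.edgeSet.ncard < Fintype.card V * (Fintype.card V - 1) / 2) :
    ¬ MarcelloStep G (⊤ : SimpleGraph V) ∧
      ∀ k : ℕ, MarcelloChain G (⊤ : SimpleGraph V) k → 2 ≤ k :=
  no_marcello_step_of_degree_sum_lt_general (h.trans_eq ncard_edgeSet_top.symm)
end

section
/- Let G be a simple graph on a finite vertex set V with |V| = n, let V* = {v ∈ V : deg_G(v) = n − 1} be the set of universal vertices, and let H be the subgraph of G induced on V ∖ V*. If there is a Marcello chain of length k from H to the complete graph on V ∖ V*, then there is a Marcello chain of length at most k from G to the complete graph on V; hence ϖ(G) ≤ ϖ(H). -/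
open SimpleGraph

attribute [local instance] Classical.propDecidable

/-!
In terms of complements, universal vertices are isolated ones and a Marcello step deletes edges.
Pushing the complements of a chain on `V ∖ V*` forward to `V` therefore gives a sequence of graphs
on `V` with the same new edges, for which the same initiators serve: codegrees `n - 1 - deg` are
unchanged, so an initiator is still not universal, and degrees grow by `|V*|`, so it may still
initiate as many edges.
-/

section Degree

variable {V : Type*} [Fintype V]

theorem mdeg_eq_degree (G : SimpleGraph V) (v : V) : mdeg G v = G.degree v :=
  Set.ncard_eq_toFinset_card' _

theorem mdeg_eq_card_sub_one_iff {G : SimpleGraph V} {v : V} :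
    mdeg G v = Fintype.card V - 1 ↔ G.IsUniversal v := by
  rw [mdeg_eq_degree, degree_eq_card_sub_one]

theorem mdeg_add_mdeg_compl (G : SimpleGraph V) (v : V) :
    mdeg G v + mdeg Gᶜ v + 1 = Fintype.card V := by
  have hlt := G.degree_lt_card_verts v
  rw [mdeg_eq_degree, mdeg_eq_degree, degree_compl]
  omega

end Degree

theorem mdeg_map {V W : Type*} (f : W ↪ V) (K : SimpleGraph W) (w : W) :
    mdeg (K.map f) (f w) = mdeg K w := by
  rw [mdeg, mdeg, neighborSet_map, Set.ncard_image_of_injective _ f.injective]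

/-- The extension of a graph along an embedding of its vertices that makes every vertex outside the
range universal. It inverts the deletion of universal vertices, and is encoded through complements,
where the vertices outside the range become isolated. -/
def extendUniversal {V W : Type*} (f : W ↪ V) (K : SimpleGraph W) : SimpleGraph V :=
  (Kᶜ.map f)ᶜ

section ExtendUniversal

variable {V W : Type*} (f : W ↪ V)

theorem extendUniversal_mono : Monotone (extendUniversal f) :=
  fun _ _ hle => compl_le_compl (map_monotone f (compl_le_compl hle))

theorem extendUniversal_top : extendUniversal f ⊤ = ⊤ := by
  ext
  simp [extendUniversal]

theorem extendUniversal_induce {G : SimpleGraph V} {S : Set V}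
    (hS : ∀ v ∉ S, G.IsUniversal v) :
    extendUniversal (Function.Embedding.subtype _) (G.induce S) = G := by
  have compl_induce : (G.induce S)ᶜ = Gᶜ.induce S := by
    ext
    simp [Subtype.ext_iff]
  have support_subset : Gᶜ.support ⊆ S := fun v hv => by
    contrapose! hv
    rw [notMem_support_iff_isIsolated, isIsolated_compl_iff_isUniversal]
    exact hS v hv
  have spanningCoe_eq : (Gᶜ.induce S).spanningCoe = Gᶜ :=
    (spanningCoe_induce_eq_self Gᶜ S).mpr support_subset
  rw [extendUniversal, compl_induce]
  exact (congrArg compl spanningCoe_eq).trans (compl_compl G)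

theorem edgeSet_extendUniversal_sdiff (K K' : SimpleGraph W) :
    (extendUniversal f K').edgeSet \ (extendUniversal f K).edgeSet =
      f.sym2Map '' (K'.edgeSet \ K.edgeSet) :=
  calc (extendUniversal f K').edgeSet \ (extendUniversal f K).edgeSet
    _ = (Kᶜ.map f).edgeSet \ (K'ᶜ.map f).edgeSet := by
      rw [← edgeSet_sdiff, extendUniversal, extendUniversal, compl_sdiff_compl, edgeSet_sdiff]
    _ = f.sym2Map '' (Kᶜ.edgeSet \ K'ᶜ.edgeSet) := by
      rw [edgeSet_map, edgeSet_map, Set.image_sdiff f.sym2Map.injective]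
    _ = f.sym2Map '' (K'.edgeSet \ K.edgeSet) := by
      rw [← edgeSet_sdiff, compl_sdiff_compl, edgeSet_sdiff]

theorem mdeg_extendUniversal_add_card [Fintype V] [Fintype W] (K : SimpleGraph W) (w : W) :
    mdeg (extendUniversal f K) (f w) + Fintype.card W = mdeg K w + Fintype.card V := by
  have hK := mdeg_add_mdeg_compl K w
  have hext := mdeg_add_mdeg_compl (extendUniversal f K) (f w)
  rw [extendUniversal, compl_compl, mdeg_map, ← extendUniversal] at hext
  omega

theorem mdeg_le_mdeg_extendUniversal [Finite V] (K : SimpleGraph W) (w : W) :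
    mdeg K w ≤ mdeg (extendUniversal f K) (f w) := by
  have := Fintype.ofFinite V
  have := Fintype.ofInjective f f.injective
  have hdeg := mdeg_extendUniversal_add_card f K w
  have hcard := Fintype.card_le_of_embedding f
  omega

theorem mdeg_extendUniversal_lt_iff [Fintype V] [Fintype W] {K : SimpleGraph W} {w : W} :
    mdeg (extendUniversal f K) (f w) < Fintype.card V - 1 ↔ mdeg K w < Fintype.card W - 1 := by
  have hdeg := mdeg_extendUniversal_add_card f K w
  have hK := mdeg_add_mdeg_compl K w
  omega

end ExtendUniversal

section Lift

variable {V W : Type*} [Fintype V] [Fintype W] {K K' : SimpleGraph W}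

theorem MarcelloStep.extendUniversal (h : MarcelloStep K K') (f : W ↪ V) :
    MarcelloStep (extendUniversal f K) (extendUniversal f K') := by
  obtain ⟨hle, init, init_mem, init_deg, init_card⟩ := h
  let init' : Sym2 V → V := Function.extend f.sym2Map (f ∘ init) fun e => e.out.1
  have init'_map (e : Sym2 W) : init' (f.sym2Map e) = f (init e) :=
    f.sym2Map.injective.extend_apply _ _ e
  refine ⟨extendUniversal_mono f hle, init', ?_⟩
  rw [edgeSet_extendUniversal_sdiff]
  refine ⟨?_, ?_, fun v => ?_⟩
  · rintro _ ⟨e, he, rfl⟩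
    rw [init'_map]
    exact Sym2.mem_map.mpr ⟨init e, init_mem e he, rfl⟩
  · rintro _ ⟨_, ⟨e, he, rfl⟩, rfl⟩
    obtain ⟨hpos, hlt⟩ := init_deg (init e) ⟨e, he, rfl⟩
    rw [init'_map]
    exact ⟨hpos.trans_le (mdeg_le_mdeg_extendUniversal f K _),
      (mdeg_extendUniversal_lt_iff f).mpr hlt⟩
  · rw [← Set.image_inter_preimage, Set.ncard_image_of_injective _ f.sym2Map.injective]
    by_cases hv : v ∈ Set.range f
    · obtain ⟨w, rfl⟩ := hv
      have preimage_eq : f.sym2Map ⁻¹' {e | init' e = f w} = {e | init e = w} := by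
        ext e
        rw [Set.mem_preimage, Set.mem_ofPred_eq, init'_map, f.apply_eq_iff_eq, Set.mem_ofPred_eq]
      rw [preimage_eq]
      exact (init_card w).trans (mdeg_le_mdeg_extendUniversal f K w)
    · have preimage_eq : f.sym2Map ⁻¹' {e | init' e = v} = ∅ :=
        Set.eq_empty_of_forall_notMem fun e he => hv ⟨init e, (init'_map e).symm.trans he⟩
      simp [preimage_eq]

theorem MarcelloChain.extendUniversal {k : ℕ} (h : MarcelloChain K K' k) (f : W ↪ V) :
    MarcelloChain (extendUniversal f K) (extendUniversal f K') k := by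
  obtain ⟨c, rfl, rfl, hstep⟩ := h
  exact ⟨fun i => _root_.extendUniversal f (c i), rfl, rfl,
    fun i hi => (hstep i hi).extendUniversal f⟩

end Lift

/-- If the subgraph of `G` induced on the non-universal vertices has a Marcello chain
of length `k` to its complete graph, then `G` has one of length at most `k`. -/
theorem marcello_chain_of_induced_on_nonuniversal {V : Type*} [Fintype V]
    (G : SimpleGraph V) (k : ℕ)
    (hchain : MarcelloChain
      (G.induce ({v : V | mdeg G v = Fintype.card V - 1}ᶜ : Set V))
      (⊤ : SimpleGraph ({v : V | mdeg G v = Fintype.card V - 1}ᶜ : Set V)) k) :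
    ∃ k' ≤ k, MarcelloChain G (⊤ : SimpleGraph V) k' := by
  have universal_of_notMem (v : V) (hv : v ∉ {v : V | mdeg G v = Fintype.card V - 1}ᶜ) :
      G.IsUniversal v :=
    mdeg_eq_card_sub_one_iff.mp (Set.notMem_compl_iff.mp hv)
  have lifted := hchain.extendUniversal (Function.Embedding.subtype _)
  rw [extendUniversal_induce universal_of_notMem, extendUniversal_top] at lifted
  exact ⟨k, le_rfl, lifted⟩
end

section
/- Let G be a simple graph on n vertices and H a simple graph on m vertices. If there is a Marcello chain of length a from G to the complete graph on its vertex set and a Marcello chain of length b from H to the complete graph on its vertex set, then there is a Marcello chain of length at most max(a, b) from the join G + H to the complete graph on its n + m vertices; hence ϖ(G + H) ≤ max{ϖ(G), ϖ(H)}. -/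
open SimpleGraph

attribute [local instance] Classical.propDecidable

/-- The join of two graphs. -/
def graphJoin {α β : Type*} (G : SimpleGraph α) (H : SimpleGraph β) :
    SimpleGraph (α ⊕ β) :=
  (G ⊕g H) ⊔ completeBipartiteGraph α β

/-!
Every edge between the two sides is already present in a join, so the new edges of
`graphJoin G' H'` over `graphJoin G H` are exactly those of `G'` over `G` together with those of
`H'` over `H`. Joining raises each degree on one side, and the upper bound `n - 1` on the degrees
of initiators, by the order of the other side. Keeping the initiators of two steps therefore gives
a step between the joins, and two chains, the shorter padded by trivial steps, can be run
simultaneously.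
-/

section Join

variable {α β : Type*}

theorem edgeSet_sum (G : SimpleGraph α) (H : SimpleGraph β) :
    (G ⊕g H).edgeSet = Sym2.map Sum.inl '' G.edgeSet ∪ Sym2.map Sum.inr '' H.edgeSet := by
  ext e
  constructor
  · induction e with | _ x y
    rcases x with x | x <;> rcases y with y | y <;> intro h
    · exact .inl ⟨s(x, y), by simpa using h, rfl⟩
    · simp at h
    · simp at h
    · exact .inr ⟨s(x, y), by simpa using h, rfl⟩
  · rintro (⟨e, he, rfl⟩ | ⟨e, he, rfl⟩)
    · exact (Embedding.sumInl (G := G) (H := H)).map_mem_edgeSet_iff.mpr he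
    · exact (Embedding.sumInr (G := G) (H := H)).map_mem_edgeSet_iff.mpr he

theorem graphJoin_mono {G G' : SimpleGraph α} {H H' : SimpleGraph β} (hG : G ≤ G') (hH : H ≤ H') :
    graphJoin G H ≤ graphJoin G' H' := by
  refine sup_le_sup_right ?_ _
  rintro (x | x) (y | y) h
  exacts [hG h, h, h, hH h]

theorem graphJoin_top_top : graphJoin (⊤ : SimpleGraph α) (⊤ : SimpleGraph β) = ⊤ := by
  ext (x | x) (y | y) <;> simp [graphJoin]

theorem graphJoin_sdiff_graphJoin (G G' : SimpleGraph α) (H H' : SimpleGraph β) :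
    graphJoin G' H' \ graphJoin G H = (G' \ G) ⊕g (H' \ H) := by
  ext (x | x) (y | y) <;> simp [graphJoin]

theorem edgeSet_graphJoin_sdiff (G G' : SimpleGraph α) (H H' : SimpleGraph β) :
    (graphJoin G' H').edgeSet \ (graphJoin G H).edgeSet =
      Sym2.map Sum.inl '' (G'.edgeSet \ G.edgeSet) ∪
        Sym2.map Sum.inr '' (H'.edgeSet \ H.edgeSet) := by
  rw [← edgeSet_sdiff, graphJoin_sdiff_graphJoin, edgeSet_sum, edgeSet_sdiff, edgeSet_sdiff]

theorem neighborSet_graphJoin_inl (G : SimpleGraph α) (H : SimpleGraph β) (v : α) :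
    (graphJoin G H).neighborSet (.inl v) = Sum.inl '' G.neighborSet v ∪ Set.range Sum.inr := by
  ext (x | x) <;> simp [graphJoin]

theorem neighborSet_graphJoin_inr (G : SimpleGraph α) (H : SimpleGraph β) (w : β) :
    (graphJoin G H).neighborSet (.inr w) = Set.range Sum.inl ∪ Sum.inr '' H.neighborSet w := by
  ext (x | x) <;> simp [graphJoin]

theorem mdeg_graphJoin_inl [Finite α] [Finite β] (G : SimpleGraph α) (H : SimpleGraph β) (v : α) :
    mdeg (graphJoin G H) (.inl v) = mdeg G v + Nat.card β := by
  rw [mdeg, neighborSet_graphJoin_inl, Set.ncard_union_eq Set.disjoint_image_inl_range_inr,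
    Set.ncard_image_of_injective _ Sum.inl_injective,
    Set.ncard_range_of_injective Sum.inr_injective, mdeg]

theorem mdeg_graphJoin_inr [Finite α] [Finite β] (G : SimpleGraph α) (H : SimpleGraph β) (w : β) :
    mdeg (graphJoin G H) (.inr w) = Nat.card α + mdeg H w := by
  rw [mdeg, neighborSet_graphJoin_inr, Set.ncard_union_eq Set.disjoint_range_inl_image_inr,
    Set.ncard_range_of_injective Sum.inl_injective,
    Set.ncard_image_of_injective _ Sum.inr_injective, mdeg]

end Join

section JoinInitiator

variable {α β : Type*} (f : Sym2 α → α) (g : Sym2 β → β)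

/-- The initiator function on a join that uses `f` on the pairs inside the left side and `g` on
the pairs inside the right side. Its value at a pair meeting both sides, which is never a new edge
of a join, is an arbitrary endpoint. -/
noncomputable def joinInitiator : Sym2 (α ⊕ β) → α ⊕ β :=
  Function.extend (Sym2.map Sum.inl) (Sum.inl ∘ f)
    (Function.extend (Sym2.map Sum.inr) (Sum.inr ∘ g) fun e => e.out.1)

theorem joinInitiator_map_inl (e : Sym2 α) :
    joinInitiator f g (e.map Sum.inl) = Sum.inl (f e) :=
  (Sym2.map.injective Sum.inl_injective).extend_apply _ _ e

theorem joinInitiator_map_inr (e : Sym2 β) :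
    joinInitiator f g (e.map Sum.inr) = Sum.inr (g e) := by
  have not_map_inl : ¬∃ d : Sym2 α, d.map Sum.inl = e.map Sum.inr := by
    rintro ⟨d, hd⟩
    induction d
    induction e
    simp at hd
  rw [joinInitiator, Function.extend_apply' _ _ _ not_map_inl,
    (Sym2.map.injective Sum.inr_injective).extend_apply, Function.comp_apply]

theorem joinInitiator_fiber_inl (S : Set (Sym2 α)) (T : Set (Sym2 β)) (v : α) :
    (Sym2.map Sum.inl '' S ∪ Sym2.map Sum.inr '' T) ∩ {e | joinInitiator f g e = .inl v} =
      Sym2.map Sum.inl '' (S ∩ {e | f e = v}) := by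
  ext e
  constructor
  · rintro ⟨⟨e, he, rfl⟩ | ⟨e, -, rfl⟩, hv⟩
    · exact ⟨e, ⟨he, Sum.inl_injective ((joinInitiator_map_inl f g e).symm.trans hv)⟩, rfl⟩
    · exact (Sum.inr_ne_inl ((joinInitiator_map_inr f g e).symm.trans hv)).elim
  · rintro ⟨e, ⟨he, rfl⟩, rfl⟩
    exact ⟨.inl ⟨e, he, rfl⟩, joinInitiator_map_inl f g e⟩

theorem joinInitiator_fiber_inr (S : Set (Sym2 α)) (T : Set (Sym2 β)) (w : β) :
    (Sym2.map Sum.inl '' S ∪ Sym2.map Sum.inr '' T) ∩ {e | joinInitiator f g e = .inr w} =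
      Sym2.map Sum.inr '' (T ∩ {e | g e = w}) := by
  ext e
  constructor
  · rintro ⟨⟨e, -, rfl⟩ | ⟨e, he, rfl⟩, hw⟩
    · exact (Sum.inl_ne_inr ((joinInitiator_map_inl f g e).symm.trans hw)).elim
    · exact ⟨e, ⟨he, Sum.inr_injective ((joinInitiator_map_inr f g e).symm.trans hw)⟩, rfl⟩
  · rintro ⟨e, ⟨he, rfl⟩, rfl⟩
    exact ⟨.inr ⟨e, he, rfl⟩, joinInitiator_map_inr f g e⟩

end JoinInitiator

theorem MarcelloStep.refl {V : Type*} [Fintype V] (G : SimpleGraph V) : MarcelloStep G G :=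
  ⟨le_rfl, fun e => e.out.1, by simp⟩

theorem MarcelloStep.join {α β : Type*} [Fintype α] [Fintype β] {G G' : SimpleGraph α}
    {H H' : SimpleGraph β} (hG : MarcelloStep G G') (hH : MarcelloStep H H') :
    MarcelloStep (graphJoin G H) (graphJoin G' H') := by
  obtain ⟨hGG', f, f_mem, f_deg, f_card⟩ := hG
  obtain ⟨hHH', g, g_mem, g_deg, g_card⟩ := hH
  refine ⟨graphJoin_mono hGG' hHH', joinInitiator f g, ?_⟩
  rw [edgeSet_graphJoin_sdiff]
  refine ⟨?mem, ?deg, ?card⟩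
  case mem =>
    rintro _ (⟨e, he, rfl⟩ | ⟨e, he, rfl⟩)
    · rw [joinInitiator_map_inl]
      exact Sym2.mem_map.mpr ⟨f e, f_mem e he, rfl⟩
    · rw [joinInitiator_map_inr]
      exact Sym2.mem_map.mpr ⟨g e, g_mem e he, rfl⟩
  case deg =>
    rintro _ ⟨_, ⟨e, he, rfl⟩ | ⟨e, he, rfl⟩, rfl⟩
    · rw [joinInitiator_map_inl, mdeg_graphJoin_inl, Nat.card_eq_fintype_card, Fintype.card_sum]
      have := f_deg (f e) ⟨e, he, rfl⟩
      lia
    · rw [joinInitiator_map_inr, mdeg_graphJoin_inr, Nat.card_eq_fintype_card, Fintype.card_sum]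
      have := g_deg (g e) ⟨e, he, rfl⟩
      lia
  case card =>
    rintro (v | w)
    · rw [joinInitiator_fiber_inl, mdeg_graphJoin_inl,
        Set.ncard_image_of_injective _ (Sym2.map.injective Sum.inl_injective)]
      exact le_add_right (f_card v)
    · rw [joinInitiator_fiber_inr, mdeg_graphJoin_inr,
        Set.ncard_image_of_injective _ (Sym2.map.injective Sum.inr_injective)]
      exact le_add_left (g_card w)

theorem MarcelloChain.mono_length {V : Type*} [Fintype V] {G H : SimpleGraph V} {k l : ℕ}
    (hkl : k ≤ l) (h : MarcelloChain G H k) : MarcelloChain G H l := by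
  obtain ⟨c, rfl, rfl, step⟩ := h
  refine ⟨fun i => c (min i k), by simp, by simp [hkl], fun i _ => ?_⟩
  beta_reduce
  rcases lt_or_ge i k with hik | hki
  · rw [min_eq_left hik.le, min_eq_left (Nat.succ_le_of_lt hik)]
    exact step i hik
  · rw [min_eq_right hki, min_eq_right (Nat.le_succ_of_le hki)]
    exact .refl _

theorem MarcelloChain.join {α β : Type*} [Fintype α] [Fintype β] {G G' : SimpleGraph α}
    {H H' : SimpleGraph β} {k : ℕ} (hG : MarcelloChain G G' k) (hH : MarcelloChain H H' k) :
    MarcelloChain (graphJoin G H) (graphJoin G' H') k := by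
  obtain ⟨c, rfl, rfl, c_step⟩ := hG
  obtain ⟨d, rfl, rfl, d_step⟩ := hH
  exact ⟨fun i => graphJoin (c i) (d i), rfl, rfl, fun i hi => (c_step i hi).join (d_step i hi)⟩

theorem marcello_join_le_general {α β : Type*} [Fintype α] [Fintype β] {G G' : SimpleGraph α}
    {H H' : SimpleGraph β} {a b : ℕ} (hG : MarcelloChain G G' a) (hH : MarcelloChain H H' b) :
    MarcelloChain (graphJoin G H) (graphJoin G' H') (max a b) :=
  (hG.mono_length (le_max_left a b)).join (hH.mono_length (le_max_right a b))

/-- `ϖ(G + H) ≤ max{ϖ(G), ϖ(H)}`. -/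
theorem marcello_join_le {α β : Type*} [Fintype α] [Fintype β]
    (G : SimpleGraph α) (H : SimpleGraph β) (a b : ℕ)
    (hGa : MarcelloChain G (⊤ : SimpleGraph α) a)
    (hHb : MarcelloChain H (⊤ : SimpleGraph β) b) :
    ∃ k ≤ max a b, MarcelloChain (graphJoin G H) (⊤ : SimpleGraph (α ⊕ β)) k := by
  rw [← graphJoin_top_top]
  exact ⟨max a b, le_rfl, marcello_join_le_general hGa hHb⟩
end
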